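/- Let x₁, …, x_n ∈ ℝ^d with ‖x_s‖ ≤ 1 for all s, let V₀ be a d × d symmetric positive definite matrix with λ_min(V₀) ≥ 1 and det(V₀) ≥ 1, and set V_s := V₀ + ∑_{i=1}^s x_i x_iᵀ. Then ∑_{s=1}^n ‖x_s‖_{(V_{s−1})⁻¹} ≤ √( n · ( 2d·log((tr(V₀) + n)/d) − 2·log det(V₀) ) ), where ‖x‖_A := √(xᵀ A x). In particular, if tr(V₀) + n ≤ T then ∑_{s=1}^n ‖x_s‖_{(V_{s−1})⁻¹} ≤ √(n · 2d·log(T/d)). -/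

import Mathlib

open Matrix Finset

/-!
Adding `x_s x_sᵀ` to `V_{s-1}` multiplies the determinant by `1 + u_s`, where
`u_s = x_sᵀ V_{s-1}⁻¹ x_s`. Inversion is antitone in the Loewner order, so `u_s ≤ x_sᵀ V₀⁻¹ x_s`
stays in `[0, 2]`, where `u ≤ 2 log (1 + u)`. Hence `∑ u_s` is at most the telescoping sum
`2 (log det V_n - log det V₀)`. AM-GM for the eigenvalues bounds `det V_n` through `tr V_n`, and
the trace grows by `‖x_s‖²` at each step. Cauchy-Schwarz passes from `∑ u_s` to `∑ √u_s`.
-/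

lemma le_two_mul_log_one_add {u : ℝ} (hu : 0 ≤ u) (hu2 : u ≤ 2) :
    u ≤ 2 * Real.log (1 + u) := by
  have half_le : u / 2 ≤ 2 * u / (u + 2) := by
    rw [div_le_div_iff₀ two_pos (by positivity)]
    nlinarith
  linarith [Real.le_log_one_add_of_nonneg hu]

lemma sum_sqrt_le_sqrt_card_mul_sum {α : Type*} {s : Finset α} {f : α → ℝ}
    (hf : ∀ i ∈ s, 0 ≤ f i) : ∑ i ∈ s, √(f i) ≤ √(#s * ∑ i ∈ s, f i) := by
  apply Real.le_sqrt_of_sq_le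
  calc (∑ i ∈ s, √(f i)) ^ 2 ≤ #s * ∑ i ∈ s, √(f i) ^ 2 := sq_sum_le_card_mul_sum_sq
    _ = #s * ∑ i ∈ s, f i := by
      rw [sum_congr rfl fun i hi => Real.sq_sqrt (hf i hi)]

lemma sum_log_le_card_mul_log_sum_div_card {α : Type*} {s : Finset α} (hs : s.Nonempty)
    {f : α → ℝ} (hf : ∀ i ∈ s, 0 < f i) :
    ∑ i ∈ s, Real.log (f i) ≤ #s * Real.log ((∑ i ∈ s, f i) / #s) := by
  have card_pos : (0 : ℝ) < #s := by exact_mod_cast hs.card_pos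
  have jensen : ∑ i ∈ s, (#s : ℝ)⁻¹ • Real.log (f i) ≤
      Real.log (∑ i ∈ s, (#s : ℝ)⁻¹ • f i) :=
    strictConcaveOn_log_Ioi.concaveOn.le_map_sum (fun _ _ => by positivity)
      (by simp [card_pos.ne']) hf
  rw [← smul_sum, ← smul_sum, smul_eq_mul, smul_eq_mul, inv_mul_eq_div, inv_mul_eq_div] at jensen
  exact (div_le_iff₀' card_pos).1 jensen

section Matrix

variable {ι : Type*} [Fintype ι] [DecidableEq ι]

lemma det_add_vecMulVec {R : Type*} [CommRing R] {A : Matrix ι ι R} (hA : IsUnit A.det)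
    (u v : ι → R) : (A + vecMulVec u v).det = A.det * (1 + v ⬝ᵥ A⁻¹ *ᵥ u) := by
  rw [vecMulVec_eq Unit, det_add_replicateCol_mul_replicateRow hA, det_unique (n := Unit),
    Matrix.mul_assoc, ← replicateCol_mulVec]
  simp [mul_apply, dotProduct]

lemma posSemidef_inv_sub_inv {𝕜 : Type*} [RCLike 𝕜] [PartialOrder 𝕜] [StarOrderedRing 𝕜]
    {A B : Matrix ι ι 𝕜} (hB : B.PosDef) (hAB : (A - B).PosSemidef) :
    (B⁻¹ - A⁻¹).PosSemidef := by
  have hA : A.PosDef := by simpa using hB.add_posSemidef hAB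
  have A_inv_mul : A⁻¹ * A = 1 := nonsing_inv_mul _ ((isUnit_iff_isUnit_det _).1 hA.isUnit)
  have B_inv_mul : B⁻¹ * B = 1 := nonsing_inv_mul _ ((isUnit_iff_isUnit_det _).1 hB.isUnit)
  have B_mul_inv : B * B⁻¹ = 1 := mul_nonsing_inv _ ((isUnit_iff_isUnit_det _).1 hB.isUnit)
  have decomposition : B⁻¹ - A⁻¹ =
      A⁻¹ * (A - B) * A⁻¹ + (B⁻¹ - A⁻¹) * B * (B⁻¹ - A⁻¹) := by
    simp only [mul_sub, sub_mul, A_inv_mul, B_inv_mul, Matrix.mul_assoc, B_mul_inv,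
      Matrix.one_mul, Matrix.mul_one]
    abel
  have A_inv_herm := hA.inv.isHermitian
  have diff_herm := hB.inv.isHermitian.sub A_inv_herm
  rw [decomposition]
  refine .add ?_ ?_
  · simpa only [A_inv_herm.eq] using hAB.conjTranspose_mul_mul_same A⁻¹
  · simpa only [diff_herm.eq] using hB.posSemidef.conjTranspose_mul_mul_same (B⁻¹ - A⁻¹)

lemma dotProduct_inv_mulVec_le {A B : Matrix ι ι ℝ} (hB : B.PosDef)
    (hAB : (A - B).PosSemidef) (x : ι → ℝ) : x ⬝ᵥ A⁻¹ *ᵥ x ≤ x ⬝ᵥ B⁻¹ *ᵥ x := by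
  have := (posSemidef_inv_sub_inv hB hAB).dotProduct_mulVec_nonneg x
  rwa [star_trivial, sub_mulVec, dotProduct_sub, sub_nonneg] at this

lemma log_det_le_card_mul_log_trace_div_card [Nonempty ι] {A : Matrix ι ι ℝ} (hA : A.PosDef) :
    Real.log A.det ≤ Fintype.card ι * Real.log (A.trace / Fintype.card ι) := by
  rw [hA.isHermitian.det_eq_prod_eigenvalues, hA.isHermitian.trace_eq_sum_eigenvalues]
  simp only [RCLike.ofReal_real_eq_id, id]
  rw [Real.log_prod fun i _ => (hA.eigenvalues_pos i).ne']
  exact sum_log_le_card_mul_log_sum_div_card univ_nonempty fun i _ => hA.eigenvalues_pos i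

end Matrix

/-- The design matrix `V_s = V₀ + ∑_{i=1}^s x_i x_iᵀ` of the feature vectors `x_1, …, x_s` with
regularizer `V₀`. Vectors are indexed from `1`; `x 0` is never used. -/
def designMatrix {ι : Type*} (V₀ : Matrix ι ι ℝ) (x : ℕ → ι → ℝ) (s : ℕ) : Matrix ι ι ℝ :=
  V₀ + ∑ i ∈ Icc 1 s, vecMulVec (x i) (x i)

namespace designMatrix

variable {ι : Type*} {V₀ : Matrix ι ι ℝ} {x : ℕ → ι → ℝ}

lemma zero : designMatrix V₀ x 0 = V₀ := by
  simp [designMatrix]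

lemma succ (s : ℕ) :
    designMatrix V₀ x (s + 1) = designMatrix V₀ x s + vecMulVec (x (s + 1)) (x (s + 1)) := by
  rw [designMatrix, designMatrix, sum_Icc_succ_top (by lia), add_assoc]

lemma posSemidef_sub [Finite ι] (V₀ : Matrix ι ι ℝ) (x : ℕ → ι → ℝ) (s : ℕ) :
    (designMatrix V₀ x s - V₀).PosSemidef := by
  rw [designMatrix, add_sub_cancel_left]
  exact posSemidef_sum _ fun i _ => by simpa using posSemidef_vecMulVec_self_star (x i)

lemma posDef [Finite ι] (hV₀ : V₀.PosDef) (x : ℕ → ι → ℝ) (s : ℕ) :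
    (designMatrix V₀ x s).PosDef := by
  simpa only [add_sub_cancel] using hV₀.add_posSemidef (posSemidef_sub V₀ x s)

variable [Fintype ι]

lemma trace_eq (s : ℕ) :
    (designMatrix V₀ x s).trace = V₀.trace + ∑ i ∈ Icc 1 s, x i ⬝ᵥ x i := by
  simp only [designMatrix, trace_add, trace_sum, trace_vecMulVec]

variable [DecidableEq ι]

lemma dotProduct_inv_mulVec_nonneg (hV₀ : V₀.PosDef) (x : ℕ → ι → ℝ) (s : ℕ) (y : ι → ℝ) :
    0 ≤ y ⬝ᵥ (designMatrix V₀ x s)⁻¹ *ᵥ y := by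
  simpa using (posDef hV₀ x s).inv.posSemidef.dotProduct_mulVec_nonneg y

lemma dotProduct_inv_mulVec_le_log_det_sub (hV₀ : V₀.PosDef) {s : ℕ}
    (hx : x (s + 1) ⬝ᵥ V₀⁻¹ *ᵥ x (s + 1) ≤ 2) :
    x (s + 1) ⬝ᵥ (designMatrix V₀ x s)⁻¹ *ᵥ x (s + 1) ≤
      2 * (Real.log (designMatrix V₀ x (s + 1)).det - Real.log (designMatrix V₀ x s).det) := by
  have det_ne_zero := (posDef hV₀ x s).det_pos.ne'
  have nonneg := dotProduct_inv_mulVec_nonneg hV₀ x s (x (s + 1))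
  have le_two := (dotProduct_inv_mulVec_le hV₀ (posSemidef_sub V₀ x s) (x (s + 1))).trans hx
  rw [succ, det_add_vecMulVec det_ne_zero.isUnit, Real.log_mul det_ne_zero (by positivity),
    add_sub_cancel_left]
  exact le_two_mul_log_one_add nonneg le_two

lemma sum_dotProduct_inv_mulVec_le (hV₀ : V₀.PosDef) {n : ℕ}
    (hx : ∀ s ∈ Icc 1 n, x s ⬝ᵥ V₀⁻¹ *ᵥ x s ≤ 2) :
    ∑ s ∈ Icc 1 n, x s ⬝ᵥ (designMatrix V₀ x (s - 1))⁻¹ *ᵥ x s ≤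
      2 * (Real.log (designMatrix V₀ x n).det - Real.log V₀.det) := by
  induction n with
  | zero => simp [zero]
  | succ n ih =>
    rw [sum_Icc_succ_top (by lia), Nat.add_sub_cancel]
    have sum_le := ih fun s hs => hx s (Icc_subset_Icc_right n.le_succ hs)
    have last_le := dotProduct_inv_mulVec_le_log_det_sub hV₀ (hx (n + 1) (by simp))
    linarith

lemma log_det_le [Nonempty ι] (hV₀ : V₀.PosDef) {n : ℕ} {L : ℝ}
    (hL : ∑ s ∈ Icc 1 n, x s ⬝ᵥ x s ≤ L) :
    Real.log (designMatrix V₀ x n).det ≤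
      Fintype.card ι * Real.log ((V₀.trace + L) / Fintype.card ι) := by
  have hV := posDef hV₀ x n
  have trace_pos := hV.trace_pos
  have trace_le : (designMatrix V₀ x n).trace ≤ V₀.trace + L := by
    rw [trace_eq]
    gcongr
  calc Real.log (designMatrix V₀ x n).det
      ≤ Fintype.card ι * Real.log ((designMatrix V₀ x n).trace / Fintype.card ι) :=
        log_det_le_card_mul_log_trace_div_card hV
    _ ≤ Fintype.card ι * Real.log ((V₀.trace + L) / Fintype.card ι) := by gcongr

lemma sum_sqrt_dotProduct_inv_mulVec_le [Nonempty ι] (hV₀ : V₀.PosDef) {n : ℕ}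
    (hx : ∀ s ∈ Icc 1 n, x s ⬝ᵥ V₀⁻¹ *ᵥ x s ≤ 2) {L : ℝ}
    (hL : ∑ s ∈ Icc 1 n, x s ⬝ᵥ x s ≤ L) :
    ∑ s ∈ Icc 1 n, √(x s ⬝ᵥ (designMatrix V₀ x (s - 1))⁻¹ *ᵥ x s) ≤
      √(n * (2 * Fintype.card ι * Real.log ((V₀.trace + L) / Fintype.card ι) -
        2 * Real.log V₀.det)) := by
  have cauchy_schwarz := sum_sqrt_le_sqrt_card_mul_sum (s := Icc 1 n)
    fun s _ => dotProduct_inv_mulVec_nonneg hV₀ x (s - 1) (x s)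
  rw [Nat.card_Icc, Nat.add_sub_cancel] at cauchy_schwarz
  refine cauchy_schwarz.trans ?_
  gcongr
  linarith [sum_dotProduct_inv_mulVec_le hV₀ hx, log_det_le hV₀ hL]

end designMatrix

theorem stmt_17_general {ι : Type*} [Fintype ι] [DecidableEq ι] [Nonempty ι] {n : ℕ}
    {x : ℕ → ι → ℝ} {V₀ : Matrix ι ι ℝ} (hV₀ : V₀.PosDef) (hV₀det : 1 ≤ V₀.det)
    (hx : ∀ s ∈ Icc 1 n, x s ⬝ᵥ V₀⁻¹ *ᵥ x s ≤ 2) {L : ℝ}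
    (hL : ∑ s ∈ Icc 1 n, x s ⬝ᵥ x s ≤ L) :
    (∑ s ∈ Icc 1 n, √(x s ⬝ᵥ (designMatrix V₀ x (s - 1))⁻¹ *ᵥ x s) ≤
      √(n * (2 * Fintype.card ι * Real.log ((V₀.trace + L) / Fintype.card ι) -
        2 * Real.log V₀.det))) ∧
    ∀ T : ℝ, V₀.trace + L ≤ T →
      ∑ s ∈ Icc 1 n, √(x s ⬝ᵥ (designMatrix V₀ x (s - 1))⁻¹ *ᵥ x s) ≤
        √(n * (2 * Fintype.card ι * Real.log (T / Fintype.card ι))) := by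
  refine ⟨designMatrix.sum_sqrt_dotProduct_inv_mulVec_le hV₀ hx hL, fun T hT => ?_⟩
  have hLT : ∑ s ∈ Icc 1 n, x s ⬝ᵥ x s ≤ T - V₀.trace := by linarith
  refine (designMatrix.sum_sqrt_dotProduct_inv_mulVec_le hV₀ hx hLT).trans ?_
  rw [add_sub_cancel]
  gcongr
  linarith [Real.log_nonneg hV₀det]

/-- deterministic elliptical-potential bound. With `‖x_s‖ ≤ 1`,
`V₀` symmetric positive definite with `λ_min(V₀) ≥ 1` (i.e. `V₀ - I ⪰ 0`) and
`det V₀ ≥ 1`, and `V_s = V₀ + ∑_{i ≤ s} x_i x_iᵀ`, the sum of self-normalized norms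
`∑_{s=1}^n ‖x_s‖_{V_{s-1}⁻¹}` is at most
`√(n (2d log((tr V₀ + n)/d) - 2 log det V₀))`; in particular, if `tr V₀ + n ≤ T`
then it is at most `√(n · 2d log(T/d))`. -/
theorem stmt_17 (d n : ℕ) (hd : 0 < d) (x : ℕ → Fin d → ℝ)
    (hx : ∀ s ∈ Finset.Icc 1 n, ∑ i, (x s i) ^ 2 ≤ 1)
    (V₀ : Matrix (Fin d) (Fin d) ℝ) (hV₀sym : V₀.IsSymm) (hV₀pd : V₀.PosDef)
    (hV₀eig : (V₀ - 1).PosSemidef) (hV₀det : 1 ≤ V₀.det)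
    (V : ℕ → Matrix (Fin d) (Fin d) ℝ)
    (hV : ∀ s : ℕ, V s = V₀ + ∑ i ∈ Finset.Icc 1 s, Matrix.vecMulVec (x i) (x i)) :
    (∑ s ∈ Finset.Icc 1 n, Real.sqrt (x s ⬝ᵥ (V (s - 1))⁻¹.mulVec (x s)) ≤
      Real.sqrt (n * (2 * d * Real.log ((V₀.trace + n) / d) - 2 * Real.log V₀.det))) ∧
    ∀ T : ℝ, V₀.trace + n ≤ T →
      ∑ s ∈ Finset.Icc 1 n, Real.sqrt (x s ⬝ᵥ (V (s - 1))⁻¹.mulVec (x s)) ≤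
        Real.sqrt (n * (2 * d * Real.log (T / d))) := by
  have : NeZero d := ⟨hd.ne'⟩
  obtain rfl : V = designMatrix V₀ x := funext hV
  have norm_le : ∀ s ∈ Icc 1 n, x s ⬝ᵥ x s ≤ 1 := by simpa only [dotProduct, ← sq] using hx
  have inv_norm_le : ∀ s ∈ Icc 1 n, x s ⬝ᵥ V₀⁻¹ *ᵥ x s ≤ 2 := fun s hs => by
    have := dotProduct_inv_mulVec_le PosDef.one hV₀eig (x s)
    rw [inv_one, one_mulVec] at this
    linarith [norm_le s hs]
  have energy_le : ∑ s ∈ Icc 1 n, x s ⬝ᵥ x s ≤ n := by simpa using sum_le_sum norm_le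
  simpa only [Fintype.card_fin] using stmt_17_general hV₀pd hV₀det inv_norm_le energy_le
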